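/- Let F be a finite field of odd order q, z a non-square with 1-z non-square, Δ = diag(1,-z). The orthogonal group O(2ν+2, Δ) = {T ∈ GL_{2ν+2}(F) : T·S·Tᵗ = S} with S = [[0,I_ν,0],[I_ν,0,0],[0,0,Δ]] has order q^{ν(ν+1)} · ∏_{i=1}^{ν}(q^i - 1) · ∏_{i=0}^{ν+1}(q^i + 1). -/

import Mathlib

open Matrix

-- Gram matrix [[0, I_ν, 0], [I_ν, 0, 0], [0, 0, diag(1,-z)]] on F^ν ⊕ F^ν ⊕ F².
def gramS (F : Type*) [Field F] (ν : ℕ) (z : F) :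
    Matrix (Fin ν ⊕ (Fin ν ⊕ Fin 2)) (Fin ν ⊕ (Fin ν ⊕ Fin 2)) F := fun i j =>
  match i, j with
  | .inl a, .inr (.inl b) => if a = b then 1 else 0
  | .inr (.inl a), .inl b => if a = b then 1 else 0
  | .inr (.inr a), .inr (.inr b) => !![(1 : F), 0; 0, -z] a b
  | _, _ => 0

/-!
The form of `gramS` is the orthogonal sum of `ν` hyperbolic planes `(a, b) ↦ a * b` and the
anisotropic norm form of `F[√z]`, the quadratic extension of `F`.

Two singular vectors `u`, `v` with `polar Q u v ≠ 0` are exchanged by the reflection in `u - v`;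
hence the orthogonal group of a nondegenerate form `hyperbolicPlane ⊥ Q` acts transitively on
nonzero singular vectors. For a hyperbolic pair `e`, `f`, the stabilizer of `e` moves `f` to every
singular vector pairing to `1` with `e`, by Eichler transformations, and there are as many of these
as vectors in the space of `Q`; the common stabilizer of `e` and `f` is the orthogonal group of `Q`.
So orbit-stabilizer peels off one hyperbolic plane at a time. What remains is the norm form of
`F[√z]`: the norm-one elements, `q + 1` in number, form the orbit of `1`, and the stabilizer of `1`
consists of the identity and conjugation.
-/

open QuadraticMap MulAction

section GroupAction

variable {G α : Type*} [Group G] [MulAction G α]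

theorem card_eq_ncard_orbit_mul_card_stabilizer (x : α) :
    Nat.card G = (orbit G x).ncard * Nat.card (stabilizer G x) := by
  rw [← index_stabilizer, mul_comm, Subgroup.card_mul_index]

theorem card_eq_ncard_orbit_mul_ncard_orbit_mul_card_inf_stabilizer (x y : α) :
    Nat.card G = (orbit G x).ncard * (orbit (stabilizer G x) y).ncard *
      Nat.card (stabilizer G x ⊓ stabilizer G y : Subgroup G) := by
  have relIndex_eq : (stabilizer G x ⊓ stabilizer G y).relIndex (stabilizer G x) =
      (orbit (stabilizer G x) y).ncard := by
    rw [Subgroup.inf_relIndex_left, ← index_stabilizer]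
    rfl
  rw [← relIndex_eq, ← index_stabilizer, mul_comm, mul_comm (Subgroup.index _),
    Subgroup.relIndex_mul_index inf_le_left, Subgroup.card_mul_index]

end GroupAction

section IsometryGroup

variable {R M M' : Type*} [CommRing R] [AddCommGroup M] [Module R M] [AddCommGroup M'] [Module R M']

/-- The orthogonal group of a quadratic form `Q`: the linear automorphisms preserving `Q`. -/
def isometryGroup (Q : QuadraticForm R M) : Subgroup (M ≃ₗ[R] M) where
  carrier := {g | ∀ x, Q (g x) = Q x}
  mul_mem' hg hh x := (hg _).trans (hh x)
  one_mem' _ := rfl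
  inv_mem' {g} hg x := by
    rw [← hg, ← LinearEquiv.mul_apply, mul_inv_cancel]
    rfl

theorem mem_isometryGroup {Q : QuadraticForm R M} {g : M ≃ₗ[R] M} :
    g ∈ isometryGroup Q ↔ ∀ x, Q (g x) = Q x :=
  Iff.rfl

theorem isometryGroup_smul_def {Q : QuadraticForm R M} (g : isometryGroup Q) (x : M) :
    g • x = (g : M ≃ₗ[R] M) x :=
  rfl

theorem map_isometryGroup_smul {Q : QuadraticForm R M} (g : isometryGroup Q) (x : M) :
    Q (g • x) = Q x :=
  g.2 x

theorem polar_isometryGroup_smul {Q : QuadraticForm R M} (g : isometryGroup Q) (x y : M) :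
    polar Q (g • x) (g • y) = polar Q x y := by
  simp only [polar, ← smul_add, map_isometryGroup_smul]

theorem card_isometryGroup_congr {Q : QuadraticForm R M} {Q' : QuadraticForm R M'}
    (e : Q.IsometryEquiv Q') : Nat.card (isometryGroup Q) = Nat.card (isometryGroup Q') := by
  refine Nat.card_congr
    { toFun g := ⟨e.toLinearEquiv.symm.trans (g.1.trans e.toLinearEquiv), fun x ↦ ?_⟩
      invFun g := ⟨e.toLinearEquiv.trans (g.1.trans e.toLinearEquiv.symm), fun x ↦ ?_⟩
      left_inv g := by ext; simp
      right_inv g := by ext; simp }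
  · simp [mem_isometryGroup.1 g.2]
  · simpa using (e.symm.map_app _).trans <| (mem_isometryGroup.1 g.2 _).trans (e.map_app x)

theorem prodCongr_refl_mem_isometryGroup (Q₁ : QuadraticForm R M) {Q₂ : QuadraticForm R M'}
    {h : M' ≃ₗ[R] M'} (hh : h ∈ isometryGroup Q₂) :
    (LinearEquiv.refl R M).prodCongr h ∈ isometryGroup (Q₁.prod Q₂) := fun x ↦ by
  simp [hh x.2]

theorem fst_apply_inr_eq_zero {Q₁ : QuadraticForm R M} {Q₂ : QuadraticForm R M'}
    (hQ₁ : Q₁.polarBilin.SeparatingRight) {g : (M × M') ≃ₗ[R] M × M'}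
    (hg : g ∈ isometryGroup (Q₁.prod Q₂)) (hfix : ∀ x, g (x, 0) = (x, 0)) (y : M') :
    (g (0, y)).1 = 0 := by
  refine hQ₁ _ fun x ↦ ?_
  have := polar_isometryGroup_smul ⟨g, hg⟩ (x, (0 : M')) (0, y)
  simpa [Subgroup.mk_smul, hfix] using this

theorem exists_prodCongr_refl_eq {Q₁ : QuadraticForm R M} {Q₂ : QuadraticForm R M'}
    (hQ₁ : Q₁.polarBilin.SeparatingRight) {g : (M × M') ≃ₗ[R] M × M'}
    (hg : g ∈ isometryGroup (Q₁.prod Q₂)) (hfix : ∀ x, g (x, 0) = (x, 0)) :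
    ∃ h ∈ isometryGroup Q₂, (LinearEquiv.refl R M).prodCongr h = g := by
  have hfix_inv (x : M) : g⁻¹ (x, 0) = (x, 0) := g.symm_apply_eq.2 (hfix x).symm
  have apply_inr (y : M') : g (0, y) = (0, (g (0, y)).2) :=
    Prod.ext (fst_apply_inr_eq_zero hQ₁ hg hfix y) rfl
  have inv_apply_inr (y : M') : g⁻¹ (0, y) = (0, (g⁻¹ (0, y)).2) :=
    Prod.ext (fst_apply_inr_eq_zero hQ₁ (inv_mem hg) hfix_inv y) rfl
  let h : M' ≃ₗ[R] M' := LinearEquiv.ofLinearMap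
    (LinearMap.snd R M M' ∘ₗ g.toLinearMap ∘ₗ LinearMap.inr R M M')
    (LinearMap.snd R M M' ∘ₗ g⁻¹.toLinearMap ∘ₗ LinearMap.inr R M M')
    (by
      ext y
      change (g (0, (g⁻¹ (0, y)).2)).2 = y
      rw [← inv_apply_inr]
      exact congrArg Prod.snd (g.apply_symm_apply (0, y)))
    (by
      ext y
      change (g⁻¹ (0, (g (0, y)).2)).2 = y
      rw [← apply_inr]
      exact congrArg Prod.snd (g.symm_apply_apply (0, y)))
  refine ⟨h, fun y ↦ ?_, LinearEquiv.ext fun ⟨x, y⟩ ↦ ?_⟩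
  · have := hg (0, y)
    rw [apply_inr] at this
    simpa [h] using this
  · calc (x, (g (0, y)).2) = (x, 0) + (0, (g (0, y)).2) := by simp
      _ = g (x, 0) + g (0, y) := by rw [hfix, ← apply_inr]
      _ = g (x, y) := by simp [← map_add]

end IsometryGroup

section Reflection

variable {K V : Type*} [Field K] [AddCommGroup V] [Module K V]

theorem exists_isometryGroup_smul_eq_of_map_sub_ne_zero {Q : QuadraticForm K V} {u v : V}
    (huv : Q u = Q v) (hd : Q (u - v) ≠ 0) : ∃ g : isometryGroup Q, g • u = v := by
  have polar_sub_left_self : polar Q (u - v) u = Q (u - v) := by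
    rw [polar_comm, polar_sub_right, polar_self, sub_eq_add_neg u v, QuadraticMap.map_add Q,
      QuadraticMap.map_neg, polar_neg_right, huv]
    simp only [nsmul_eq_mul, Nat.cast_ofNat]
    ring
  let f : Module.Dual K V := (Q (u - v))⁻¹ • Q.polarBilin (u - v)
  have f_self : f (u - v) = 2 := by
    rw [LinearMap.smul_apply, polarBilin_apply_apply, polar_self]
    simp [mul_left_comm, hd]
  have f_left : f u = 1 := by
    rw [LinearMap.smul_apply, polarBilin_apply_apply, polar_sub_left_self, smul_eq_mul,
      inv_mul_cancel₀ hd]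
  have reflection_mem : Module.reflection f_self ∈ isometryGroup Q := fun x ↦ by
    rw [Module.reflection_apply, sub_eq_add_neg, QuadraticMap.map_add Q,
      QuadraticMap.map_neg, polar_neg_right, polar_smul_right, QuadraticMap.map_smul, polar_comm]
    simp only [f, LinearMap.smul_apply, polarBilin_apply_apply, smul_eq_mul]
    field_simp
    ring
  refine ⟨⟨_, reflection_mem⟩, ?_⟩
  rw [isometryGroup_smul_def, Module.reflection_apply, f_left, one_smul, sub_sub_cancel]

end Reflection

section HyperbolicPlane

variable (R : Type*) [CommRing R]

/-- The hyperbolic plane: the quadratic form `(a, b) ↦ a * b` on `R × R`. -/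
def hyperbolicPlane : QuadraticForm R (R × R) :=
  linMulLin (LinearMap.fst R R R) (LinearMap.snd R R R)

@[simp]
theorem hyperbolicPlane_apply (x : R × R) : hyperbolicPlane R x = x.1 * x.2 :=
  rfl

@[simp]
theorem polar_hyperbolicPlane (x y : R × R) :
    polar (hyperbolicPlane R) x y = x.1 * y.2 + x.2 * y.1 := by
  simp only [polar, hyperbolicPlane_apply, Prod.fst_add, Prod.snd_add]
  ring

theorem separatingRight_polarBilin_hyperbolicPlane :
    (hyperbolicPlane R).polarBilin.SeparatingRight := fun y hy ↦
  Prod.ext (by simpa using hy (0, 1)) (by simpa using hy (1, 0))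

end HyperbolicPlane

section EichlerTransformation

variable {R M : Type*} [CommRing R] [AddCommGroup M] [Module R M] (Q : QuadraticForm R M)

/-- The Eichler transformation (Siegel transvection) of `hyperbolicPlane R ⊥ Q` attached to `w`:
it fixes the isotropic vector `((1, 0), 0)` and moves `((0, 1), 0)` to `((-Q w, 1), w)`. -/
def eichlerTransformation (w : M) : ((R × R) × M) ≃ₗ[R] (R × R) × M where
  toFun x := ((x.1.1 - polar Q w x.2 - x.1.2 * Q w, x.1.2), x.2 + x.1.2 • w)
  invFun x := ((x.1.1 + polar Q w x.2 - x.1.2 * Q w, x.1.2), x.2 - x.1.2 • w)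
  map_add' x y := by
    ext
    · simp only [Prod.fst_add, Prod.snd_add, polar_add_right]
      ring
    · rfl
    · simp only [Prod.fst_add, Prod.snd_add, add_smul]
      abel
  map_smul' c x := by
    ext
    · simp only [Prod.smul_fst, Prod.smul_snd, polar_smul_right, smul_eq_mul, RingHom.id_apply]
      ring
    · rfl
    · simp only [Prod.smul_fst, Prod.smul_snd, smul_add, smul_smul, smul_eq_mul, RingHom.id_apply]
  left_inv x := by
    ext
    · simp only [polar_add_right, polar_smul_right, polar_self, smul_eq_mul, nsmul_eq_mul]
      push_cast
      ring
    · rfl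
    · exact add_sub_cancel_right _ _
  right_inv x := by
    ext
    · simp only [polar_sub_right, polar_smul_right, polar_self, smul_eq_mul, nsmul_eq_mul]
      push_cast
      ring
    · rfl
    · exact sub_add_cancel _ _

theorem eichlerTransformation_apply (w : M) (x : (R × R) × M) : eichlerTransformation Q w x =
    ((x.1.1 - polar Q w x.2 - x.1.2 * Q w, x.1.2), x.2 + x.1.2 • w) :=
  rfl

theorem eichlerTransformation_mem_isometryGroup (w : M) :
    eichlerTransformation Q w ∈ isometryGroup ((hyperbolicPlane R).prod Q) := fun x ↦ by
  rw [eichlerTransformation_apply, prod_apply, prod_apply, hyperbolicPlane_apply,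
    hyperbolicPlane_apply, QuadraticMap.map_add Q, QuadraticMap.map_smul, polar_smul_right,
    polar_comm Q x.2]
  simp only [smul_eq_mul]
  ring

end EichlerTransformation

section HyperbolicPlaneStabilizer

variable {R M : Type*} [CommRing R] [AddCommGroup M] [Module R M] (Q : QuadraticForm R M)

theorem orbit_stabilizer_hyperbolicPlane_prod :
    orbit (stabilizer (isometryGroup ((hyperbolicPlane R).prod Q)) (((1, 0), 0) : (R × R) × M))
      (((0, 1), 0) : (R × R) × M) = Set.range fun w : M ↦ ((-Q w, 1), w) := by
  refine Set.Subset.antisymm ?_ ?_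
  · rintro v ⟨⟨g, hg⟩, hv : g • (((0, 1), 0) : (R × R) × M) = v⟩
    rw [mem_stabilizer_iff] at hg
    have polar_eq := polar_isometryGroup_smul g ((1, 0), 0) ((0, 1), 0)
    have singular := map_isometryGroup_smul g ((0, 1), 0)
    rw [hg, hv] at polar_eq
    rw [hv] at singular
    obtain ⟨⟨a, b⟩, w⟩ := v
    obtain rfl : b = 1 := by simpa using polar_eq
    obtain rfl : a = -Q w := by simpa [eq_neg_iff_add_eq_zero] using singular
    exact ⟨w, rfl⟩
  · rintro _ ⟨w, rfl⟩
    let g : isometryGroup ((hyperbolicPlane R).prod Q) :=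
      ⟨_, eichlerTransformation_mem_isometryGroup Q w⟩
    have hg : g • (((1, 0), 0) : (R × R) × M) = ((1, 0), 0) := by
      simp [g, eichlerTransformation_apply]
    have hg' : g • (((0, 1), 0) : (R × R) × M) = ((-Q w, 1), w) := by
      simp [g, eichlerTransformation_apply]
    exact ⟨⟨g, hg⟩, hg'⟩

theorem ncard_orbit_stabilizer_hyperbolicPlane_prod :
    (orbit (stabilizer (isometryGroup ((hyperbolicPlane R).prod Q)) (((1, 0), 0) : (R × R) × M))
      (((0, 1), 0) : (R × R) × M)).ncard = Nat.card M := by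
  rw [orbit_stabilizer_hyperbolicPlane_prod, ← Set.image_univ,
    Set.ncard_image_of_injective _ fun _ _ h ↦ congrArg Prod.snd h, Set.ncard_univ]

theorem card_stabilizer_inf_stabilizer_hyperbolicPlane_prod :
    Nat.card (stabilizer (isometryGroup ((hyperbolicPlane R).prod Q)) (((1, 0), 0) : (R × R) × M) ⊓
      stabilizer _ (((0, 1), 0) : (R × R) × M) : Subgroup _) = Nat.card (isometryGroup Q) := by
  let φ (h : isometryGroup Q) : isometryGroup ((hyperbolicPlane R).prod Q) :=
    ⟨_, prodCongr_refl_mem_isometryGroup (hyperbolicPlane R) h.2⟩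
  have φ_mem (h : isometryGroup Q) : φ h ∈ stabilizer _ (((1, 0), 0) : (R × R) × M) ⊓
      stabilizer _ (((0, 1), 0) : (R × R) × M) := by
    constructor <;> simp [φ, Subgroup.mk_smul]
  refine (Nat.card_eq_of_bijective (fun h ↦ ⟨φ h, φ_mem h⟩) ⟨fun h h' hh ↦ ?_, ?_⟩).symm
  · have φ_eq : φ h = φ h' := congrArg Subtype.val hh
    refine Subtype.ext (LinearEquiv.ext fun y ↦ ?_)
    exact congrArg (fun g : isometryGroup _ ↦ (g • (((0, 0), y) : (R × R) × M)).2) φ_eq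
  · rintro ⟨⟨g, hg⟩, hg_fst, hg_snd⟩
    have hfix (x : R × R) : g (x, 0) = (x, 0) := by
      calc g (x, 0) = g (x.1 • ((1, 0), 0) + x.2 • ((0, 1), 0)) := by simp
        _ = x.1 • ((1, 0), 0) + x.2 • ((0, 1), 0) := by
          rw [map_add, map_smul, map_smul]
          exact congrArg₂ (x.1 • · + x.2 • ·) hg_fst hg_snd
        _ = (x, 0) := by simp
    obtain ⟨h, hh, h_eq⟩ :=
      exists_prodCongr_refl_eq (separatingRight_polarBilin_hyperbolicPlane R) hg hfix
    exact ⟨⟨h, hh⟩, Subtype.ext (Subtype.ext h_eq)⟩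

end HyperbolicPlaneStabilizer

section SingularVectors

variable {R M : Type*} [CommRing R] [AddCommGroup M] [Module R M]

/-- The nonzero zeros of a quadratic form. -/
def singularVectors (Q : QuadraticForm R M) : Set M :=
  {x | x ≠ 0 ∧ Q x = 0}

section Radical

variable {Q : QuadraticForm R M}

theorem exists_polar_ne_zero_of_radical_eq_bot (hQ : Q.radical = ⊥) {x : M} (hx : Q x = 0)
    (hx0 : x ≠ 0) : ∃ y, polar Q x y ≠ 0 := by
  contrapose! hx0
  exact (Submodule.mem_bot R).1 (hQ ▸ ⟨hx, LinearMap.ext hx0⟩)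

theorem radical_eq_bot_of_anisotropic (hQ : Q.Anisotropic) : Q.radical = ⊥ :=
  (Submodule.eq_bot_iff _).2 fun x hx ↦ hQ x hx.1

theorem radical_hyperbolicPlane_prod (hQ : Q.radical = ⊥) :
    ((hyperbolicPlane R).prod Q).radical = ⊥ := by
  rw [Submodule.eq_bot_iff]
  rintro ⟨⟨a, b⟩, x⟩ ⟨singular, polar_eq_zero⟩
  have polar_eq (v : (R × R) × M) : a * v.1.2 + b * v.1.1 + polar Q x v.2 = 0 := by
    simpa using LinearMap.congr_fun polar_eq_zero v
  obtain rfl : b = 0 := by simpa using polar_eq ((1, 0), 0)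
  obtain rfl : a = 0 := by simpa using polar_eq ((0, 1), 0)
  have x_mem : x ∈ Q.radical :=
    ⟨by simpa using singular, LinearMap.ext fun y ↦ by simpa using polar_eq ((0, 0), y)⟩
  rw [hQ, Submodule.mem_bot] at x_mem
  rw [x_mem]
  rfl

theorem exists_polar_hyperbolicPlane_prod_ne_zero (hQ : Q.radical = ⊥) {v : (R × R) × M}
    (hv0 : v ≠ 0) (hv : (hyperbolicPlane R).prod Q v = 0) (hv2 : v.1.2 = 0) :
    ∃ y : M, polar ((hyperbolicPlane R).prod Q) ((-Q y, 1), y) v ≠ 0 := by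
  obtain ⟨⟨a, b⟩, x⟩ := v
  obtain rfl : b = 0 := hv2
  by_cases ha : a = 0
  · subst ha
    have hx0 : x ≠ 0 := by
      rintro rfl
      exact hv0 rfl
    obtain ⟨y, hy⟩ := exists_polar_ne_zero_of_radical_eq_bot hQ (by simpa using hv) hx0
    exact ⟨y, by simpa [polar_comm Q y] using hy⟩
  · exact ⟨0, by simpa using ha⟩

end Radical

variable {K V : Type*} [Field K] [AddCommGroup V] [Module K V] {Q : QuadraticForm K V}

theorem exists_smul_eq_of_polar_ne_zero {u v : V} (hu : Q u = 0) (hv : Q v = 0)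
    (huv : polar Q u v ≠ 0) : ∃ g : isometryGroup Q, g • u = v := by
  refine exists_isometryGroup_smul_eq_of_map_sub_ne_zero (hu.trans hv.symm) ?_
  rw [sub_eq_add_neg, QuadraticMap.map_add Q, QuadraticMap.map_neg, polar_neg_right, hu, hv]
  simpa using huv

theorem orbit_hyperbolicPlane_prod (hQ : Q.radical = ⊥) :
    orbit (isometryGroup ((hyperbolicPlane K).prod Q)) (((1, 0), 0) : (K × K) × V) =
      singularVectors ((hyperbolicPlane K).prod Q) := by
  refine Set.Subset.antisymm ?_ fun v ⟨hv0, hv⟩ ↦ ?_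
  · rintro _ ⟨g, rfl⟩
    exact ⟨(smul_ne_zero_iff_ne g).2 (by simp), (map_isometryGroup_smul g _).trans (by simp)⟩
  · -- If `v` is orthogonal to `((1, 0), 0)`, pass through a singular vector orthogonal to neither.
    by_cases hv2 : v.1.2 = 0
    · obtain ⟨y, hy⟩ := exists_polar_hyperbolicPlane_prod_ne_zero hQ hv0 hv hv2
      have hy_singular : (hyperbolicPlane K).prod Q ((-Q y, 1), y) = 0 := by simp
      have he : polar ((hyperbolicPlane K).prod Q) ((1, 0), 0) ((-Q y, 1), y) ≠ 0 := by simp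
      obtain ⟨g, hg⟩ := exists_smul_eq_of_polar_ne_zero (by simp) hy_singular he
      obtain ⟨g', hg'⟩ := exists_smul_eq_of_polar_ne_zero hy_singular hv hy
      exact ⟨g' * g, by simp only [mul_smul, hg, hg']⟩
    · exact exists_smul_eq_of_polar_ne_zero (by simp) hv (by simpa using hv2)

theorem card_isometryGroup_hyperbolicPlane_prod (hQ : Q.radical = ⊥) :
    Nat.card (isometryGroup ((hyperbolicPlane K).prod Q)) =
      (singularVectors ((hyperbolicPlane K).prod Q)).ncard * Nat.card V *
        Nat.card (isometryGroup Q) := by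
  rw [card_eq_ncard_orbit_mul_ncard_orbit_mul_card_inf_stabilizer ((1, 0), 0)
      (((0, 1), 0) : (K × K) × V), orbit_hyperbolicPlane_prod hQ,
    ncard_orbit_stabilizer_hyperbolicPlane_prod,
    card_stabilizer_inf_stabilizer_hyperbolicPlane_prod]

end SingularVectors

section SingularCount

variable {R M M' : Type*} [CommRing R] [AddCommGroup M] [Module R M] [AddCommGroup M'] [Module R M']

theorem ncard_singularVectors_congr {Q : QuadraticForm R M} {Q' : QuadraticForm R M'}
    (e : Q.IsometryEquiv Q') : (singularVectors Q).ncard = (singularVectors Q').ncard := by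
  have image_eq : e.toLinearEquiv '' singularVectors Q = singularVectors Q' := by
    ext y
    rw [LinearEquiv.image_eq_preimage_symm]
    simp [singularVectors]
  rw [← image_eq, Set.ncard_image_of_injective _ e.toLinearEquiv.injective]

theorem ncard_singularVectors_add_one [Finite M] (Q : QuadraticForm R M) :
    (singularVectors Q).ncard + 1 = Nat.card {x // Q x = 0} := by
  have zeros_eq : insert 0 (singularVectors Q) = {x | Q x = 0} := by
    ext x
    by_cases hx : x = 0 <;> simp [singularVectors, hx]
  rw [← Set.ncard_insert_of_notMem (fun h ↦ h.1 rfl) (Set.toFinite _), zeros_eq]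
  rfl

theorem singularVectors_eq_empty {Q : QuadraticForm R M} (hQ : Q.Anisotropic) :
    singularVectors Q = ∅ :=
  Set.eq_empty_of_forall_notMem fun x hx ↦ hx.1 (hQ x hx.2)

variable {K V : Type*} [Field K] [AddCommGroup V] [Module K V]

theorem card_zeros_hyperbolicPlane_prod [Finite K] [Finite V] (Q : QuadraticForm K V) :
    Nat.card {v // (hyperbolicPlane K).prod Q v = 0} =
      (Nat.card K - 1) * Nat.card V + Nat.card K * Nat.card {x // Q x = 0} := by
  rw [← Nat.card_units, ← Nat.card_prod, ← Nat.card_prod, ← Nat.card_sum]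
  refine (Nat.card_eq_of_bijective (Sum.elim
    (fun p : Kˣ × V ↦ ⟨((-Q p.2 / p.1, p.1), p.2), by simp⟩)
    (fun p : K × {x // Q x = 0} ↦ ⟨((p.1, 0), p.2), by simp [p.2.2]⟩)) ⟨?_, ?_⟩).symm
  · refine Function.Injective.sumElim ?_ ?_ ?_
    · rintro ⟨b, x⟩ ⟨b', x'⟩ h
      simp only [Subtype.mk.injEq, Prod.mk.injEq, Units.val_inj] at h
      exact Prod.ext h.1.2 h.2
    · rintro ⟨a, x⟩ ⟨a', x'⟩ h
      simp only [Subtype.mk.injEq, Prod.mk.injEq] at h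
      exact Prod.ext h.1.1 (Subtype.ext h.2)
    · rintro ⟨b, x⟩ ⟨a, y⟩ h
      simp only [Subtype.mk.injEq, Prod.mk.injEq] at h
      exact b.ne_zero h.1.2
  · rintro ⟨⟨⟨a, b⟩, x⟩, hv⟩
    replace hv : a * b + Q x = 0 := hv
    by_cases hb : b = 0
    · subst hb
      exact ⟨.inr (a, ⟨x, by simpa using hv⟩), rfl⟩
    · refine ⟨.inl (Units.mk0 b hb, x), ?_⟩
      have : a = -Q x / b := by rw [eq_div_iff hb, eq_neg_iff_add_eq_zero, hv]
      simp [this]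

end SingularCount

section HyperbolicSum

variable {R M : Type*} [CommRing R] [AddCommGroup M] [Module R M] (Q : QuadraticForm R M)

/-- The orthogonal sum of `n` hyperbolic planes and `Q`. -/
def hyperbolicSum (n : ℕ) : QuadraticForm R ((Fin n → R × R) × M) :=
  (QuadraticMap.pi fun _ ↦ hyperbolicPlane R).prod Q

theorem hyperbolicSum_apply (n : ℕ) (v : (Fin n → R × R) × M) :
    hyperbolicSum Q n v = ∑ i, (v.1 i).1 * (v.1 i).2 + Q v.2 := by
  simp [hyperbolicSum]

/-- The empty hyperbolic sum is `Q` itself. -/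
def hyperbolicSumZero : (hyperbolicSum Q 0).IsometryEquiv Q where
  toLinearEquiv := LinearEquiv.uniqueProd
  map_app' v := by simp [hyperbolicSum_apply]

/-- Splitting off the first of `n + 1` hyperbolic planes. -/
def hyperbolicSumSucc (n : ℕ) :
    (hyperbolicSum Q (n + 1)).IsometryEquiv ((hyperbolicPlane R).prod (hyperbolicSum Q n)) where
  toLinearEquiv := ((Fin.consLinearEquiv R fun _ : Fin (n + 1) ↦ R × R).symm.prodCongr
    (LinearEquiv.refl R M)).trans (LinearEquiv.prodAssoc R (R × R) (Fin n → R × R) M)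
  map_app' v := by
    simp [hyperbolicSum_apply, Fin.consLinearEquiv, Fin.tail, Fin.sum_univ_succ, add_assoc]

end HyperbolicSum

section OrderHyperbolicSum

theorem card_fin_arrow_prod_self_prod (α β : Type*) (n : ℕ) :
    Nat.card ((Fin n → α × α) × β) = Nat.card α ^ (2 * n) * Nat.card β := by
  simp only [Nat.card_prod, Nat.card_fun, Nat.card_fin, ← pow_two, ← pow_mul]

theorem radical_hyperbolicSum {R M : Type*} [CommRing R] [AddCommGroup M] [Module R M]
    {Q : QuadraticForm R M} (hQ : Q.radical = ⊥) (n : ℕ) :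
    (hyperbolicSum Q n).radical = ⊥ := by
  induction n with
  | zero => rw [← (hyperbolicSumZero Q).symm.map_radical, hQ, Submodule.map_bot]
  | succ n ih =>
    rw [← (hyperbolicSumSucc Q n).symm.map_radical, radical_hyperbolicPlane_prod ih,
      Submodule.map_bot]

variable {K V : Type*} [Field K] [AddCommGroup V] [Module K V] [Finite K] [Finite V]

theorem ncard_singularVectors_hyperbolicSum_succ_add_one (Q : QuadraticForm K V) (n : ℕ) :
    (singularVectors (hyperbolicSum Q (n + 1))).ncard + 1 =
      (Nat.card K - 1) * (Nat.card K ^ (2 * n) * Nat.card V) +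
        Nat.card K * ((singularVectors (hyperbolicSum Q n)).ncard + 1) := by
  rw [ncard_singularVectors_congr (hyperbolicSumSucc Q n), ncard_singularVectors_add_one,
    card_zeros_hyperbolicPlane_prod, card_fin_arrow_prod_self_prod, ncard_singularVectors_add_one]

variable {Q : QuadraticForm K V}

theorem ncard_singularVectors_hyperbolicSum_succ (hQ : Q.Anisotropic) (n : ℕ) :
    (singularVectors (hyperbolicSum Q (n + 1))).ncard =
      (Nat.card K ^ (n + 1) - 1) * (Nat.card K ^ n * Nat.card V + 1) := by
  have one_le_pow (k : ℕ) : 1 ≤ Nat.card K ^ k := Nat.one_le_pow _ _ Nat.card_pos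
  have one_le : 1 ≤ Nat.card K := Nat.card_pos
  apply Nat.add_right_cancel (m := 1)
  rw [ncard_singularVectors_hyperbolicSum_succ_add_one]
  induction n with
  | zero =>
    rw [ncard_singularVectors_congr (hyperbolicSumZero Q), singularVectors_eq_empty hQ]
    zify [one_le_pow, one_le]
    simp only [mul_zero, pow_zero, one_mul, Set.ncard_empty, CharP.cast_eq_zero, zero_add, mul_one,
      pow_one]
    ring
  | succ n ih =>
    rw [ncard_singularVectors_hyperbolicSum_succ_add_one, ih]
    zify [one_le_pow, one_le]
    ring

theorem card_isometryGroup_hyperbolicSum (hQ : Q.Anisotropic) (n : ℕ) :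
    Nat.card (isometryGroup (hyperbolicSum Q n)) =
      (∏ i ∈ Finset.range n, (Nat.card K ^ (i + 1) - 1) * (Nat.card K ^ i * Nat.card V + 1) *
        (Nat.card K ^ (2 * i) * Nat.card V)) * Nat.card (isometryGroup Q) := by
  induction n with
  | zero => rw [card_isometryGroup_congr (hyperbolicSumZero Q), Finset.prod_range_zero, one_mul]
  | succ n ih =>
    rw [card_isometryGroup_congr (hyperbolicSumSucc Q n), card_isometryGroup_hyperbolicPlane_prod
      (radical_hyperbolicSum (radical_eq_bot_of_anisotropic hQ) n), ih,
      card_fin_arrow_prod_self_prod, ← ncard_singularVectors_congr (hyperbolicSumSucc Q n),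
      ncard_singularVectors_hyperbolicSum_succ hQ, Finset.prod_range_succ]
    ring

end OrderHyperbolicSum

section NormForm

variable {R : Type*} [CommRing R] (a b : R)

/-- The norm of the quadratic algebra `R[X]/(X ^ 2 - b * X - a)` as a quadratic form. -/
def normForm : QuadraticForm R (QuadraticAlgebra R a b) :=
  linMulLin (QuadraticAlgebra.reₗ a b) (QuadraticAlgebra.reₗ a b) +
    b • linMulLin (QuadraticAlgebra.reₗ a b) (QuadraticAlgebra.imₗ a b) -
    a • linMulLin (QuadraticAlgebra.imₗ a b) (QuadraticAlgebra.imₗ a b)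

variable {a b}

@[simp]
theorem normForm_apply (x : QuadraticAlgebra R a b) :
    normForm a b x = QuadraticAlgebra.norm x := by
  simp [normForm, QuadraticAlgebra.norm_def, mul_assoc]

theorem polar_normForm_one (x : QuadraticAlgebra R a b) :
    polar (normForm a b) 1 x = QuadraticAlgebra.trace x := by
  simp only [polar, normForm_apply, QuadraticAlgebra.norm_def, QuadraticAlgebra.trace_def,
    QuadraticAlgebra.re_add, QuadraticAlgebra.im_add, QuadraticAlgebra.re_one,
    QuadraticAlgebra.im_one]
  ring

theorem orbit_normForm_one :
    orbit (isometryGroup (normForm a b)) (1 : QuadraticAlgebra R a b) =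
      unitary (QuadraticAlgebra R a b) := by
  refine Set.Subset.antisymm ?_ fun u hu ↦ ?_
  · rintro _ ⟨g, rfl⟩
    have := map_isometryGroup_smul g 1
    simpa [← QuadraticAlgebra.norm_eq_one_iff_mem_unitary] using this
  · let g := DistribMulAction.toLinearEquiv R (QuadraticAlgebra R a b)
      (⟨u, hu⟩ : unitary (QuadraticAlgebra R a b))
    have hg : g ∈ isometryGroup (normForm a b) := fun x ↦ by
      simp [g, Submonoid.smul_def, QuadraticAlgebra.norm_eq_one_iff_mem_unitary.2 hu]
    exact ⟨⟨g, hg⟩, mul_one u⟩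

variable (a b) in
/-- The conjugation `star` of a quadratic algebra as a linear equivalence. -/
def conjLinearEquiv : QuadraticAlgebra R a b ≃ₗ[R] QuadraticAlgebra R a b :=
  LinearEquiv.ofInvolutive
    { toFun := star
      map_add' := star_add
      map_smul' c x := by ext <;> simp [mul_add, mul_left_comm] } star_star

theorem conjLinearEquiv_apply (x : QuadraticAlgebra R a b) : conjLinearEquiv a b x = star x :=
  rfl

theorem conjLinearEquiv_mem_isometryGroup : conjLinearEquiv a b ∈ isometryGroup (normForm a b) :=
  fun x ↦ by simp [conjLinearEquiv_apply]

theorem quadraticAlgebra_linearEquiv_ext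
    {g g' : QuadraticAlgebra R a b ≃ₗ[R] QuadraticAlgebra R a b}
    (h_one : g 1 = g' 1) (h_omega : g QuadraticAlgebra.omega = g' QuadraticAlgebra.omega) :
    g = g' := by
  refine LinearEquiv.ext fun ⟨x, y⟩ ↦ ?_
  simp only [QuadraticAlgebra.mk_eq_add_smul_omega, Algebra.algebraMap_eq_smul_one, map_add,
    map_smul, h_one, h_omega]

theorem sub_mul_sub_star_eq_zero {x y : QuadraticAlgebra R a b}
    (h_trace : y.trace = x.trace) (h_norm : y.norm = x.norm) : (y - x) * (y - star x) = 0 := by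
  have y_root := y.sq_sub_trace_smul_add_norm_eq_zero
  rw [h_trace, h_norm, Algebra.smul_def,
    QuadraticAlgebra.algebraMap_norm_eq_mul_star,
    QuadraticAlgebra.algebraMap_trace_eq_add_star] at y_root
  linear_combination y_root

end NormForm

theorem card_quadraticAlgebra {K : Type*} (a b : K) :
    Nat.card (QuadraticAlgebra K a b) = Nat.card K ^ 2 := by
  rw [Nat.card_congr (QuadraticAlgebra.equivProd a b), Nat.card_prod, pow_two]

section NormFormField

variable {K : Type*} [Field K] {a b : K} [Fact (∀ r, r ^ 2 ≠ a + b * r)]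

theorem anisotropic_normForm : (normForm a b).Anisotropic := fun x hx ↦
  QuadraticAlgebra.norm_eq_zero_iff_eq_zero.1 ((normForm_apply x).symm.trans hx)

theorem card_stabilizer_normForm_one
    (hsep : star (QuadraticAlgebra.omega : QuadraticAlgebra K a b) ≠ QuadraticAlgebra.omega) :
    Nat.card (stabilizer (isometryGroup (normForm a b)) (1 : QuadraticAlgebra K a b)) = 2 := by
  let conj : stabilizer (isometryGroup (normForm a b)) (1 : QuadraticAlgebra K a b) :=
    ⟨⟨_, conjLinearEquiv_mem_isometryGroup⟩, star_one _⟩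
  refine (Nat.card_eq_two_iff' 1).2 ⟨conj, fun h ↦ hsep ?_, ?_⟩
  · exact congrArg (· • (QuadraticAlgebra.omega : QuadraticAlgebra K a b)) h
  · rintro ⟨g, hg⟩ g_ne_one
    rw [mem_stabilizer_iff] at hg
    have trace_eq (x : QuadraticAlgebra K a b) : (g • x).trace = x.trace := by
      rw [← polar_normForm_one, ← polar_normForm_one, ← polar_isometryGroup_smul g 1 x, hg]
    have norm_eq (x : QuadraticAlgebra K a b) : (g • x).norm = x.norm := by
      simpa using map_isometryGroup_smul g x
    obtain h | h := mul_eq_zero.1 (sub_mul_sub_star_eq_zero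
      (trace_eq QuadraticAlgebra.omega) (norm_eq QuadraticAlgebra.omega))
    · refine (g_ne_one (Subtype.ext (Subtype.ext ?_))).elim
      exact quadraticAlgebra_linearEquiv_ext hg (sub_eq_zero.1 h)
    · refine Subtype.ext (Subtype.ext ?_)
      exact quadraticAlgebra_linearEquiv_ext (hg.trans (star_one _).symm) (sub_eq_zero.1 h)

variable [Finite K]

theorem unitsMap_quadraticAlgebraNorm_surjective :
    Function.Surjective (Units.map (QuadraticAlgebra.norm (a := a) (b := b))) := by
  have : Finite (QuadraticAlgebra K a b) := Module.finite_of_finite K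
  have norm_eq : Algebra.norm K = (QuadraticAlgebra.norm : QuadraticAlgebra K a b →* K) :=
    MonoidHom.ext QuadraticAlgebra.det_toLinearMap_eq_norm
  rw [← norm_eq]
  exact FiniteField.unitsMap_norm_surjective K (QuadraticAlgebra K a b)

variable (a b) in
theorem card_unitary_quadraticAlgebra :
    Nat.card (unitary (QuadraticAlgebra K a b)) = Nat.card K + 1 := by
  let N := Units.map (QuadraticAlgebra.norm (a := a) (b := b))
  have card_ker : Nat.card N.ker = Nat.card (unitary (QuadraticAlgebra K a b)) := by
    have toUnits_mem (u : unitary (QuadraticAlgebra K a b)) : Unitary.toUnits u ∈ N.ker :=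
      Units.ext (QuadraticAlgebra.norm_eq_one_iff_mem_unitary.2 u.2)
    refine (Nat.card_eq_of_bijective
      (fun u ↦ (⟨Unitary.toUnits u, toUnits_mem u⟩ : N.ker)) ⟨?_, ?_⟩).symm
    · exact fun u v h ↦ Unitary.toUnits_injective (congrArg Subtype.val h)
    · rintro ⟨u, hu⟩
      exact ⟨⟨u, QuadraticAlgebra.norm_eq_one_iff_mem_unitary.1 (congrArg Units.val hu)⟩,
        Subtype.ext (Units.ext rfl)⟩
  have card_mul : Nat.card N.ker * (Nat.card K - 1) = Nat.card K ^ 2 - 1 := by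
    rw [← Nat.card_units, ← card_quadraticAlgebra a b, ← Nat.card_units, ← N.ker.card_mul_index,
      Subgroup.index_ker, MonoidHom.range_eq_top.2 unitsMap_quadraticAlgebraNorm_surjective,
      Subgroup.card_top]
  have pos : 0 < Nat.card K - 1 := Nat.sub_pos_of_lt Finite.one_lt_card
  refine Nat.eq_of_mul_eq_mul_right pos ?_
  rw [← card_ker, card_mul, ← one_pow 2, Nat.sq_sub_sq, one_pow]

theorem card_isometryGroup_normForm
    (hsep : star (QuadraticAlgebra.omega : QuadraticAlgebra K a b) ≠ QuadraticAlgebra.omega) :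
    Nat.card (isometryGroup (normForm a b)) = 2 * (Nat.card K + 1) := by
  rw [card_eq_ncard_orbit_mul_card_stabilizer (1 : QuadraticAlgebra K a b), orbit_normForm_one,
    card_stabilizer_normForm_one hsep, mul_comm]
  exact congrArg (2 * ·) (card_unitary_quadraticAlgebra a b)

end NormFormField

section MatrixOrthogonalGroup

variable {R n : Type*} [CommRing R] [Invertible (2 : R)] [Fintype n] [DecidableEq n]

theorem toMatrix'_toQuadraticForm' {S : Matrix n n R} (hS : S.IsSymm) :
    S.toQuadraticForm'.toMatrix' = S := by
  have symm (x y : n → R) : Matrix.toLinearMap₂' R S x y = Matrix.toLinearMap₂' R S y x := by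
    rw [toLinearMap₂'_apply', toLinearMap₂'_apply', dotProduct_mulVec, ← mulVec_transpose, hS.eq,
      dotProduct_comm]
  rw [QuadraticForm.toMatrix', Matrix.toQuadraticForm', associated_left_inverse R symm,
    LinearMap.toMatrix'_toLinearMap₂']

theorem mem_isometryGroup_iff_toMatrix' {Q : QuadraticForm R (n → R)} {g : (n → R) ≃ₗ[R] n → R} :
    g ∈ isometryGroup Q ↔
      (LinearMap.toMatrix' g.toLinearMap)ᵀ * Q.toMatrix' * LinearMap.toMatrix' g.toLinearMap =
        Q.toMatrix' := by
  have toMatrix'_injective : Function.Injective (QuadraticForm.toMatrix' (R := R) (n := n)) :=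
    (LinearMap.toMatrix₂' R).injective.comp (associated_rightInverse R).injective
  rw [← QuadraticForm.toMatrix'_comp, toMatrix'_injective.eq_iff, QuadraticMap.ext_iff]
  rfl

theorem card_matrix_mul_toMatrix'_mul_transpose_eq (Q : QuadraticForm R (n → R)) :
    Nat.card {T : Matrix n n R // IsUnit T.det ∧ T * Q.toMatrix' * Tᵀ = Q.toMatrix'} =
      Nat.card (isometryGroup Q) := by
  have toMatrix'_mem (g : isometryGroup Q) :
      IsUnit (LinearMap.toMatrix' g.1.toLinearMap)ᵀ.det ∧
        (LinearMap.toMatrix' g.1.toLinearMap)ᵀ * Q.toMatrix' *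
          (LinearMap.toMatrix' g.1.toLinearMap)ᵀᵀ = Q.toMatrix' := by
    rw [det_transpose, LinearMap.det_toMatrix', transpose_transpose]
    exact ⟨g.1.isUnit_det', mem_isometryGroup_iff_toMatrix'.1 g.2⟩
  refine (Nat.card_eq_of_bijective (fun g ↦ (⟨_, toMatrix'_mem g⟩ :
    {T : Matrix n n R // IsUnit T.det ∧ T * Q.toMatrix' * Tᵀ = Q.toMatrix'})) ⟨?_, ?_⟩).symm
  · intro g g' h
    exact Subtype.ext <| LinearEquiv.toLinearMap_injective <| LinearMap.toMatrix'.injective <|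
      transpose_injective <| congrArg Subtype.val h
  · rintro ⟨T, hT, hTQ⟩
    let g := Tᵀ.toLinearEquiv' (Tᵀ.invertibleOfIsUnitDet (T.det_transpose.symm ▸ hT))
    have toMatrix'_g : LinearMap.toMatrix' g.toLinearMap = Tᵀ := LinearMap.toMatrix'_toLin' _
    have hg : g ∈ isometryGroup Q := by
      rwa [mem_isometryGroup_iff_toMatrix', toMatrix'_g, transpose_transpose]
    refine ⟨⟨g, hg⟩, Subtype.ext ?_⟩
    simp only [toMatrix'_g, transpose_transpose]

end MatrixOrthogonalGroup

section GramMatrix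

variable {F : Type*} [Field F] (ν : ℕ) (z : F)

theorem gramS_isSymm : (gramS F ν z).IsSymm := by
  ext (i | i | i) (j | j | j)
  case inr.inr.inr.inr => fin_cases i <;> fin_cases j <;> simp [gramS]
  all_goals simp [gramS, eq_comm]

theorem toQuadraticForm'_gramS_apply (x : Fin ν ⊕ (Fin ν ⊕ Fin 2) → F) :
    (gramS F ν z).toQuadraticForm' x =
      ∑ i, 2 * x (.inl i) * x (.inr (.inl i)) +
        (x (.inr (.inr 0)) ^ 2 - z * x (.inr (.inr 1)) ^ 2) := by
  have hyperbolic_part : ∑ i, 2 * x (.inl i) * x (.inr (.inl i)) =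
      ∑ i, x (.inl i) * x (.inr (.inl i)) + ∑ i, x (.inr (.inl i)) * x (.inl i) := by
    rw [← Finset.sum_add_distrib]
    exact Finset.sum_congr rfl fun i _ ↦ by ring
  rw [toQuadraticForm', LinearMap.BilinMap.toQuadraticMap_apply, toLinearMap₂'_apply',
    hyperbolic_part]
  simp only [dotProduct, mulVec, Fintype.sum_sum_type, Fin.sum_univ_two, gramS]
  simp only [zero_mul, Finset.sum_const_zero, ite_mul, one_mul, Finset.sum_ite_eq, Finset.mem_univ,
    ↓reduceIte, add_zero, zero_add, of_apply, cons_val', cons_val_zero, cons_val_fin_one,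
    cons_val_one, neg_mul, mul_neg]
  ring

variable [Invertible (2 : F)]

/-- The quadratic form of `gramS` is the orthogonal sum of `ν` hyperbolic planes and the norm form
of `F[√z]`. As `gramS` gives twice the hyperbolic form on each pair of coordinates, the first of
them is rescaled by `2`. -/
def gramSIsometryEquiv :
    (gramS F ν z).toQuadraticForm'.IsometryEquiv (hyperbolicSum (normForm z 0) ν) where
  toFun x := (fun i ↦ (2 * x (.inl i), x (.inr (.inl i))), ⟨x (.inr (.inr 0)), x (.inr (.inr 1))⟩)
  invFun v := Sum.elim (fun i ↦ ⅟2 * (v.1 i).1)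
    (Sum.elim (fun i ↦ (v.1 i).2) ![v.2.re, v.2.im])
  map_add' x y := by ext <;> simp [mul_add]
  map_smul' c x := by ext <;> simp [mul_left_comm]
  left_inv x := by
    ext (i | i | i)
    · simp [Invertible.ne_zero (2 : F)]
    · simp
    · fin_cases i <;> simp
  right_inv v := by ext <;> simp [Invertible.ne_zero (2 : F)]
  map_app' x := by
    simp only [hyperbolicSum_apply, normForm_apply, QuadraticAlgebra.norm_def, zero_mul, add_zero,
      toQuadraticForm'_gramS_apply, add_right_inj]
    ring

theorem card_matrix_mul_gramS_mul_transpose_eq :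
    Nat.card {T : Matrix (Fin ν ⊕ (Fin ν ⊕ Fin 2)) (Fin ν ⊕ (Fin ν ⊕ Fin 2)) F //
        IsUnit T.det ∧ T * gramS F ν z * Tᵀ = gramS F ν z} =
      Nat.card (isometryGroup (hyperbolicSum (normForm z 0) ν)) := by
  rw [← card_isometryGroup_congr (gramSIsometryEquiv ν z),
    ← card_matrix_mul_toMatrix'_mul_transpose_eq, toMatrix'_toQuadraticForm' (gramS_isSymm ν z)]

end GramMatrix

theorem two_ne_zero_of_not_isSquare {F : Type*} [Field F] [Finite F] {z : F} (hz : ¬IsSquare z) :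
    (2 : F) ≠ 0 :=
  Ring.two_ne_zero fun h ↦ hz (FiniteField.isSquare_of_char_two h z)

theorem prod_range_eq_prod_Icc_mul_prod_Icc (q n : ℕ) :
    (∏ i ∈ Finset.range n, (q ^ (i + 1) - 1) * (q ^ i * q ^ 2 + 1) * (q ^ (2 * i) * q ^ 2)) *
        (2 * (q + 1)) =
      q ^ (n * (n + 1)) * (∏ i ∈ Finset.Icc 1 n, (q ^ i - 1)) *
        ∏ i ∈ Finset.Icc 0 (n + 1), (q ^ i + 1) := by
  induction n with
  | zero => simp [Finset.prod_Icc_succ_top]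
  | succ n ih =>
    rw [Finset.prod_range_succ, mul_right_comm, ih,
      Finset.prod_Icc_succ_top (a := 1) (b := n) (by lia),
      Finset.prod_Icc_succ_top (a := 0) (b := n + 1) (by lia)]
    ring

theorem stmt_18_general (F : Type*) [Field F] [Finite F] (z : F) (hz : ¬ IsSquare z) (ν : ℕ) :
    Nat.card {T : Matrix (Fin ν ⊕ (Fin ν ⊕ Fin 2)) (Fin ν ⊕ (Fin ν ⊕ Fin 2)) F //
        IsUnit T.det ∧ T * gramS F ν z * Tᵀ = gramS F ν z}
      = Nat.card F ^ (ν * (ν + 1)) * (∏ i ∈ Finset.Icc 1 ν, (Nat.card F ^ i - 1)) *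
          ∏ i ∈ Finset.Icc 0 (ν + 1), (Nat.card F ^ i + 1) := by
  have two_ne_zero : (2 : F) ≠ 0 := two_ne_zero_of_not_isSquare hz
  let _ : Invertible (2 : F) := invertibleOfNonzero two_ne_zero
  have : Fact (∀ r, r ^ 2 ≠ z + 0 * r) := ⟨fun r h ↦ hz ⟨r, by linear_combination -h⟩⟩
  have : Finite (QuadraticAlgebra F z 0) := Module.finite_of_finite F
  have star_omega_ne :
      star (QuadraticAlgebra.omega : QuadraticAlgebra F z 0) ≠ QuadraticAlgebra.omega := fun h ↦ by
    have neg_one_eq_one : (-1 : F) = 1 := by simpa using congrArg QuadraticAlgebra.im h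
    exact two_ne_zero (by linear_combination -neg_one_eq_one)
  rw [card_matrix_mul_gramS_mul_transpose_eq, card_isometryGroup_hyperbolicSum anisotropic_normForm,
    card_quadraticAlgebra, card_isometryGroup_normForm star_omega_ne,
    prod_range_eq_prod_Icc_mul_prod_Icc]

theorem stmt_18 (F : Type*) [Field F] [Fintype F] (q : ℕ)
    (hq : Fintype.card F = q) (hodd : Odd q) (z : F) (hz : ¬ IsSquare z)
    (hz1 : ¬ IsSquare (1 - z)) (ν : ℕ) :
    Nat.card {T : Matrix (Fin ν ⊕ (Fin ν ⊕ Fin 2)) (Fin ν ⊕ (Fin ν ⊕ Fin 2)) F //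
        IsUnit T.det ∧ T * gramS F ν z * Tᵀ = gramS F ν z}
      = q ^ (ν * (ν + 1)) * (∏ i ∈ Finset.Icc 1 ν, (q ^ i - 1)) *
          ∏ i ∈ Finset.Icc 0 (ν + 1), (q ^ i + 1) := by
  rw [← hq, ← Nat.card_eq_fintype_card]
  exact stmt_18_general F z hz ν
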